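/- Let M be the 4 × 4 integer matrix [[2,1,0,1],[1,2,1,0],[0,1,2,1],[1,0,1,2]] (a symmetric circulant), acting ℤ-linearly on ℤ⁴ by v ↦ M·v. Then the direct limit of the ℕ-indexed system ℤ⁴ →^M ℤ⁴ →^M ⋯ (bonding map from stage i to stage j equal to M^{j−i}) is isomorphic, as an abelian group, to ℤ[1/4] ⊕ ℤ[1/2] ⊕ ℤ[1/2] (which, as an abstract abelian group, is ℤ[1/2]³). -/

import Mathlib

/-!
Over any commutative ring `R` the matrix factors as `M = Q P` through `R³`, where `P` records the
number of tiles and the two components of the vector sum of the arrows, while `P Q = diag(4, 2, 2)`.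
The systems of `Q P` and `P Q` interleave, since `P` and `Q` alternately carry one to the other, so
they have the same limit. For `diag(4, 2, 2)` the limit splits, and iterating multiplication by `x`
on `R` yields `R[1/x]`.
-/

section IterateLimit

variable {R M N L K : Type*} [Semiring R]
  [AddCommMonoid M] [Module R M] [AddCommMonoid N] [Module R N]
  [AddCommMonoid L] [Module R L] [AddCommMonoid K] [Module R K]

/-- The direct limit of the system `M → M → ⋯` all of whose bonding maps are the endomorphism `f`;
the map from stage `i` to stage `j` is `f ^ (j - i)`, which is only used for `i ≤ j`. -/
abbrev IterateLimit (f : Module.End R M) : Type _ :=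
  Module.DirectLimit (R := R) (ι := ℕ) (fun _ => M) (fun i j _ => f ^ (j - i))

lemma IterateLimit.of_pow_apply (f : Module.End R M) (i n : ℕ) (m : M) :
    (Module.DirectLimit.of R ℕ _ _ (i + n) ((f ^ n) m) : IterateLimit f) =
      Module.DirectLimit.of R ℕ _ _ i m := by
  simpa only [Nat.add_sub_cancel_left] using Module.DirectLimit.of_f (R := R) (ι := ℕ)
    (G := fun _ => M) (f := fun i j _ => f ^ (j - i)) (hij := Nat.le_add_right i n) (x := m)

lemma moduleEnd_pow_apply_eq_of_le {f : Module.End R M} {x y : M} {k n : ℕ} (hkn : k ≤ n)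
    (h : (f ^ k) x = (f ^ k) y) : (f ^ n) x = (f ^ n) y := by
  rw [← pow_sub_mul_pow f hkn, Module.End.mul_apply, Module.End.mul_apply, h]

lemma linearMap_prodMap_pow_apply (f : Module.End R M) (g : Module.End R N) (n : ℕ) (x : M)
    (y : N) :
    ((f.prodMap g : Module.End R (M × N)) ^ n) (x, y) = ((f ^ n) x, (g ^ n) y) :=
  (LinearMap.congr_fun (map_pow (LinearMap.prodMapRingHom R M N) (f, g) n) (x, y)).symm

/-- `φ : M → L` exhibits `L` as the direct limit of `M → M → ⋯` along `f`, with `φ` the map from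
stage `0` and `F` the automorphism of `L` induced by `f`. The fields parallel those of
`IsLocalizedModule`: this is localization at `X` of `M`, viewed as an `R[X]`-module through `f`. -/
structure IsIterateLimit (f : Module.End R M) (F : Module.End R L) (φ : M →ₗ[R] L) : Prop where
  isUnit : IsUnit F
  comm : F ∘ₗ φ = φ ∘ₗ f
  surj : ∀ z : L, ∃ (n : ℕ) (m : M), (F ^ n) z = φ m
  exists_of_eq : ∀ {x y : M}, φ x = φ y → ∃ n : ℕ, (f ^ n) x = (f ^ n) y

namespace IsIterateLimit

variable {f : Module.End R M} {F : Module.End R L} {φ : M →ₗ[R] L}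
  {g : Module.End R N} {G : Module.End R K} {ψ : N →ₗ[R] K}

lemma pow_apply_map (h : IsIterateLimit f F φ) (n : ℕ) (m : M) : (F ^ n) (φ m) = φ ((f ^ n) m) :=
  LinearMap.congr_fun (Module.End.commute_pow_left_of_commute h.comm n) m

lemma pow_injective (h : IsIterateLimit f F φ) (n : ℕ) : Function.Injective (F ^ n) :=
  ((Module.End.isUnit_iff _).mp (h.isUnit.pow n)).injective

lemma exists_pow_apply_eq_of_le (h : IsIterateLimit f F φ) (z : L) :
    ∃ n : ℕ, ∀ k, n ≤ k → ∃ m : M, (F ^ k) z = φ m := by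
  obtain ⟨n, m, hm⟩ := h.surj z
  refine ⟨n, fun k hk => ⟨(f ^ (k - n)) m, ?_⟩⟩
  rw [← h.pow_apply_map, ← hm, ← Module.End.mul_apply, pow_sub_mul_pow F hk]

/-- The map to the limit from stage `i`, namely `F⁻ⁱ ∘ φ`. -/
noncomputable def stageMap (h : IsIterateLimit f F φ) (i : ℕ) : M →ₗ[R] L :=
  (↑(h.isUnit.unit⁻¹ ^ i) : Module.End R L) ∘ₗ φ

lemma pow_apply_stageMap (h : IsIterateLimit f F φ) (i : ℕ) (m : M) :
    (F ^ i) (h.stageMap i m) = φ m := by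
  have hinv : F ^ i * ↑(h.isUnit.unit⁻¹ ^ i) = 1 := by
    simpa using (h.isUnit.unit ^ i).mul_inv
  exact LinearMap.congr_fun hinv (φ m)

lemma stageMap_pow_sub_apply (h : IsIterateLimit f F φ) {i j : ℕ} (hij : i ≤ j) (m : M) :
    h.stageMap j ((f ^ (j - i)) m) = h.stageMap i m := by
  apply h.pow_injective j
  calc (F ^ j) (h.stageMap j ((f ^ (j - i)) m))
      = (F ^ (j - i)) (φ m) := by rw [h.pow_apply_stageMap, h.pow_apply_map]
    _ = (F ^ (j - i)) ((F ^ i) (h.stageMap i m)) := by rw [h.pow_apply_stageMap]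
    _ = (F ^ j) (h.stageMap i m) := by rw [← Module.End.mul_apply, pow_sub_mul_pow F hij]

/-- The comparison map from the direct limit. -/
noncomputable def lift (h : IsIterateLimit f F φ) : IterateLimit f →ₗ[R] L :=
  Module.DirectLimit.lift R ℕ _ _ h.stageMap fun _ _ hij => h.stageMap_pow_sub_apply hij

lemma lift_of (h : IsIterateLimit f F φ) (i : ℕ) (m : M) :
    h.lift (Module.DirectLimit.of R ℕ _ _ i m) = h.stageMap i m :=
  Module.DirectLimit.lift_of ..

lemma lift_injective (h : IsIterateLimit f F φ) : Function.Injective h.lift := by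
  intro z w hzw
  obtain ⟨i, x, y, rfl, rfl⟩ := Module.DirectLimit.exists_of₂ z w
  rw [h.lift_of, h.lift_of] at hzw
  have hφ : φ x = φ y := by rw [← h.pow_apply_stageMap i, hzw, h.pow_apply_stageMap]
  obtain ⟨n, hn⟩ := h.exists_of_eq hφ
  rw [← IterateLimit.of_pow_apply f i n x, hn, IterateLimit.of_pow_apply]

lemma lift_surjective (h : IsIterateLimit f F φ) : Function.Surjective h.lift := by
  intro z
  obtain ⟨n, m, hm⟩ := h.surj z
  refine ⟨Module.DirectLimit.of R ℕ _ _ n m, h.pow_injective n ?_⟩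
  rw [h.lift_of, h.pow_apply_stageMap, hm]

/-- A module satisfying `IsIterateLimit` is isomorphic to the direct limit. -/
noncomputable def linearEquiv (h : IsIterateLimit f F φ) : IterateLimit f ≃ₗ[R] L :=
  LinearEquiv.ofBijective h.lift ⟨h.lift_injective, h.lift_surjective⟩

lemma prodMap (hf : IsIterateLimit f F φ) (hg : IsIterateLimit g G ψ) :
    IsIterateLimit (f.prodMap g) (F.prodMap G) (φ.prodMap ψ) where
  isUnit := by
    have hFG : IsUnit (F, G) := Prod.isUnit_iff.mpr ⟨hf.isUnit, hg.isUnit⟩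
    exact hFG.map (LinearMap.prodMapRingHom R L K)
  comm := by rw [LinearMap.prodMap_comp, LinearMap.prodMap_comp, hf.comm, hg.comm]
  surj := by
    rintro ⟨z, w⟩
    obtain ⟨a, ha⟩ := hf.exists_pow_apply_eq_of_le z
    obtain ⟨b, hb⟩ := hg.exists_pow_apply_eq_of_le w
    obtain ⟨m, hm⟩ := ha _ (le_max_left a b)
    obtain ⟨n, hn⟩ := hb _ (le_max_right a b)
    refine ⟨max a b, (m, n), ?_⟩
    rw [linearMap_prodMap_pow_apply, hm, hn, LinearMap.prodMap_apply]
  exists_of_eq := by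
    rintro ⟨x, y⟩ ⟨x', y'⟩ hxy
    obtain ⟨a, ha⟩ := hf.exists_of_eq (congrArg Prod.fst hxy)
    obtain ⟨b, hb⟩ := hg.exists_of_eq (congrArg Prod.snd hxy)
    refine ⟨max a b, ?_⟩
    rw [linearMap_prodMap_pow_apply, linearMap_prodMap_pow_apply]
    exact Prod.ext (moduleEnd_pow_apply_eq_of_le (le_max_left a b) ha)
      (moduleEnd_pow_apply_eq_of_le (le_max_right a b) hb)

lemma comp_swap {p : M →ₗ[R] N} {q : N →ₗ[R] M} (h : IsIterateLimit (p ∘ₗ q) G ψ) :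
    IsIterateLimit (q ∘ₗ p) G (ψ ∘ₗ p) where
  isUnit := h.isUnit
  comm := by rw [← LinearMap.comp_assoc, h.comm]; rfl
  surj z := by
    obtain ⟨n, y, hy⟩ := h.surj z
    refine ⟨n + 1, q y, ?_⟩
    rw [pow_succ', Module.End.mul_apply, hy]
    exact LinearMap.congr_fun h.comm y
  exists_of_eq {x y} hxy := by
    obtain ⟨n, hn⟩ := h.exists_of_eq hxy
    let qp : Module.End R M := q ∘ₗ p
    let pq : Module.End R N := p ∘ₗ q
    have intertwine : (qp ^ n) ∘ₗ q = q ∘ₗ (pq ^ n) :=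
      Module.End.commute_pow_left_of_commute (LinearMap.comp_assoc q p q) n
    have pow_succ_apply (m : M) : (qp ^ (n + 1)) m = q ((pq ^ n) (p m)) := by
      rw [pow_succ]
      exact LinearMap.congr_fun intertwine (p m)
    exact ⟨n + 1, by rw [pow_succ_apply, pow_succ_apply, hn]⟩

end IsIterateLimit

end IterateLimit

lemma isIterateLimit_of_isLocalizedModule_powers {R M L : Type*} [CommSemiring R]
    [AddCommMonoid M] [Module R M] [AddCommMonoid L] [Module R L] (x : R) (φ : M →ₗ[R] L)
    [IsLocalizedModule (Submonoid.powers x) φ] :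
    IsIterateLimit (algebraMap R (Module.End R M) x) (algebraMap R (Module.End R L) x) φ where
  isUnit := IsLocalizedModule.map_units φ ⟨x, Submonoid.mem_powers x⟩
  comm := by ext m; simp
  surj z := by
    obtain ⟨⟨m, _, n, rfl⟩, hm⟩ := IsLocalizedModule.surj (Submonoid.powers x) φ z
    exact ⟨n, m, by rw [← map_pow]; exact hm⟩
  exists_of_eq hxy := by
    obtain ⟨⟨_, n, rfl⟩, hn⟩ := IsLocalizedModule.exists_of_eq (S := Submonoid.powers x) hxy
    exact ⟨n, by rw [← map_pow]; exact hn⟩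

section Chair

open scoped Matrix

variable (R : Type*) [CommRing R]

/-- The matrix of the arrow substitution: each arrow is replaced by two arrows of its own type and
one of each of the two adjacent types. -/
abbrev chairMatrix : Matrix (Fin 4) (Fin 4) R :=
  !![2, 1, 0, 1; 1, 2, 1, 0; 0, 1, 2, 1; 1, 0, 1, 2]

/-- The number of tiles and the vector sum of a collection of arrows, given by the multiplicities
of the four arrow types in cyclic order. Opposite arrows are `0`, `2` and `1`, `3`. -/
def arrowInvariants : (Fin 4 → R) →ₗ[R] R × R × R where
  toFun v := (v 0 + v 1 + v 2 + v 3, v 0 - v 2, v 1 - v 3)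
  map_add' v w := by ext <;> simp only [Pi.add_apply, Prod.mk_add_mk] <;> ring
  map_smul' c v := by ext <;> simp [mul_add, mul_sub]

lemma arrowInvariants_apply (v : Fin 4 → R) :
    arrowInvariants R v = (v 0 + v 1 + v 2 + v 3, v 0 - v 2, v 1 - v 3) :=
  rfl

/-- The substituted arrows, as a function of the invariants of the original ones: their number
`s` and vector sum `(b, c)`. -/
def arrowsOfInvariants : R × R × R →ₗ[R] (Fin 4 → R) where
  toFun | (s, b, c) => ![s + b, s + c, s - b, s - c]
  map_add' x y := by
    ext i
    fin_cases i <;>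
      simp only [Fin.zero_eta, Fin.mk_one, Fin.reduceFinMk, Matrix.cons_val, Pi.add_apply] <;>
      ring
  map_smul' c x := by ext i; fin_cases i <;> simp [mul_add, mul_sub]

lemma arrowsOfInvariants_apply (s b c : R) :
    arrowsOfInvariants R (s, b, c) = ![s + b, s + c, s - b, s - c] :=
  rfl

lemma chairMatrix_mulVec (v : Fin 4 → R) :
    chairMatrix R *ᵥ v = ![2 * v 0 + v 1 + v 3, v 0 + 2 * v 1 + v 2, v 1 + 2 * v 2 + v 3,
      v 0 + v 2 + 2 * v 3] := by
  ext i
  fin_cases i <;> simp [Matrix.mulVec, dotProduct, Fin.sum_univ_four]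

lemma arrowsOfInvariants_comp_arrowInvariants :
    arrowsOfInvariants R ∘ₗ arrowInvariants R = Matrix.toLin' (chairMatrix R) := by
  refine LinearMap.ext fun v => ?_
  rw [LinearMap.comp_apply, arrowInvariants_apply, arrowsOfInvariants_apply, Matrix.toLin'_apply,
    chairMatrix_mulVec]
  congrm ![?_, ?_, ?_, ?_] <;> ring

lemma arrowInvariants_comp_arrowsOfInvariants :
    arrowInvariants R ∘ₗ arrowsOfInvariants R =
      (algebraMap R (Module.End R R) 4).prodMap
        ((algebraMap R (Module.End R R) 2).prodMap (algebraMap R (Module.End R R) 2)) := by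
  refine LinearMap.ext fun ⟨s, b, c⟩ => ?_
  rw [LinearMap.comp_apply, arrowsOfInvariants_apply, arrowInvariants_apply]
  simp only [Matrix.cons_val, LinearMap.prodMap_apply, Module.algebraMap_end_apply, smul_eq_mul]
  congrm (?_, ?_, ?_) <;> ring

theorem stmt_10_general :
    Nonempty (IterateLimit (Matrix.toLin' (chairMatrix R)) ≃ₗ[R]
      Localization.Away (4 : R) × Localization.Away (2 : R) × Localization.Away (2 : R)) := by
  have away (x : R) := isIterateLimit_of_isLocalizedModule_powers x
    (Algebra.linearMap R (Localization.Away x))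
  have diagonal := (away 4).prodMap ((away 2).prodMap (away 2))
  rw [← arrowInvariants_comp_arrowsOfInvariants] at diagonal
  have chair := diagonal.comp_swap
  rw [arrowsOfInvariants_comp_arrowInvariants] at chair
  exact ⟨chair.linearEquiv⟩

end Chair

/-- The direct limit of the ℕ-indexed system `ℤ⁴ →^M ℤ⁴ →^M ⋯` for the symmetric
circulant `M = [[2,1,0,1],[1,2,1,0],[0,1,2,1],[1,0,1,2]]` (bonding map from stage `i`
to stage `j` given by `M^(j-i)`) is isomorphic, as an abelian group, to
`ℤ[1/4] ⊕ ℤ[1/2] ⊕ ℤ[1/2]`. -/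
theorem stmt_10 :
    Nonempty
      (Module.DirectLimit (R := ℤ) (ι := ℕ) (fun _ : ℕ => Fin 4 → ℤ)
          (fun i j _ =>
            (Matrix.toLin'
              (!![2, 1, 0, 1; 1, 2, 1, 0; 0, 1, 2, 1; 1, 0, 1, 2] :
                Matrix (Fin 4) (Fin 4) ℤ)) ^ (j - i)) ≃+
        Localization.Away (4 : ℤ) × Localization.Away (2 : ℤ) × Localization.Away (2 : ℤ)) :=
  -- `e.toAddEquiv` would infer `AddCommGroup.toIntModule`, not the product module structure.
  (stmt_10_general ℤ).map fun e => { e with }
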